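/- arXiv:2509.02501 — 3 statements merged into one kernel-verified Lean document; each statement's English description precedes it below -/
import Mathlib

section
/- Let ρ be an irreducible finite-dimensional complex representation of SL(2, ℤ/16ℤ) that does not factor through the reduction homomorphism SL(2, ℤ/16ℤ) → SL(2, ℤ/8ℤ). If ρ(t) has at most three distinct eigenvalues, then ρ is three-dimensional, ρ(t) has exactly three distinct eigenvalues, and each of these eigenvalues is a primitive 8th or a primitive 16th root of unity. -/
/-- The group `SL(2, ℤ/nℤ)`. -/
abbrev SL2 (n : ℕ) := Matrix.SpecialLinearGroup (Fin 2) (ZMod n)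

/-- The element `t = [[1,1],[0,1]]` of `SL(2, ℤ/nℤ)`. -/
def tGen (n : ℕ) : SL2 n := ⟨!![1, 1; 0, 1], by simp [Matrix.det_fin_two_of]⟩

/-- A representation is irreducible if the space is nonzero and the only invariant
subspaces are `⊥` and `⊤`. -/
def IsIrreducibleRep {G V : Type} [Group G] [AddCommGroup V] [Module ℂ V]
    (ρ : Representation ℂ G V) : Prop :=
  Nontrivial V ∧ ∀ p : Submodule ℂ V, (∀ g : G, p.map (ρ g) ≤ p) → p = ⊥ ∨ p = ⊤

/-!
Write `t = [[1, 1], [0, 1]]` and `s = [[0, -1], [1, 0]]`. The kernel of reduction modulo `8` is the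
normal closure of `t ^ 8`, so `ρ (t ^ 8) ≠ 1`. Since `t` is conjugate to `t ^ 9`, the eigenvalues
`l` of `ρ t` with `l ^ 8 = -1` come in pairs `{l, -l}`; if one such pair were the whole spectrum,
`ρ t ^ 2` would be a scalar, contradicting the braid relation `t s t s t = s`. So the spectrum is
`{l, -l, n}`, with `n ^ 8 = 1`. As `t ^ 8` commutes with its conjugate by `s`, some nonzero `w` is
fixed by `t ^ 8` while `s w` is negated by it, which means `t w = n w` and `t ^ 2 s w = l ^ 2 s w`.
The braid relation then makes the span of `w`, `s w`, `t s w` invariant, and makes `t s w` an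
eigenvector of `s` with eigenvalue `(n l ^ 2)⁻¹`; since `s ^ 2` acts as `±1`, this determines the
order of `n`.
-/

section Spectrum

open Module Polynomial

theorem isPrimitiveRoot_two_pow_succ_of_pow_eq_neg_one {R : Type*} [CommRing R]
    (h2 : (-1 : R) ≠ 1) {z : R} {k : ℕ} (h : z ^ 2 ^ k = -1) : IsPrimitiveRoot z (2 ^ (k + 1)) := by
  rw [← orderOf_eq_prime_pow (x := z) (p := 2) (n := k) (by rwa [h])
    (by rw [pow_succ, pow_mul, h, neg_one_sq])]
  exact IsPrimitiveRoot.orderOf z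

theorem neg_one_ne_one_of_hasEnoughRootsOfUnity_two_mul (R : Type*) [CommRing R] [IsDomain R]
    (n : ℕ) [NeZero n] [HasEnoughRootsOfUnity R (2 * n)] : (-1 : R) ≠ 1 := by
  obtain ⟨ζ, hζ⟩ := HasEnoughRootsOfUnity.exists_primitiveRoot R (2 * n)
  have := hζ.neZero'
  intro h
  apply this.ne
  push_cast
  linear_combination (-n : R) * h

variable {K V : Type*} [Field K] [AddCommGroup V] [Module K V]

theorem pow_eq_one_of_mem_spectrum {A : Type*} [Ring A] [Algebra K A] {a : A}
    {n : ℕ} (ha : a ^ n = 1) {z : K} (hz : z ∈ spectrum K a) : z ^ n = 1 := by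
  have : Nontrivial A := by
    by_contra h
    rw [not_nontrivial_iff_subsingleton] at h
    simp [spectrum.of_subsingleton] at hz
  have := spectrum.pow_mem_pow a n hz
  rwa [ha, spectrum.one_eq] at this

theorem pow_mem_spectrum_of_isConj {A : Type*} [Ring A] [Algebra K A] {a : A} {n : ℕ}
    (h : IsConj a (a ^ n)) {z : K} (hz : z ∈ spectrum K a) : z ^ n ∈ spectrum K a := by
  obtain ⟨u, hu⟩ := h
  rw [← spectrum.units_conjugate (u := u), (Units.mul_inv_eq_iff_eq_mul u).mpr hu.eq]
  exact spectrum.pow_mem_pow a n hz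

theorem ncard_spectrum_le_finrank [FiniteDimensional K V] (T : End K V) :
    (spectrum K T).ncard ≤ finrank K V := by
  have hT (z : spectrum K T) : ∃ v, T.HasEigenvector z v :=
    (End.hasEigenvalue_iff_mem_spectrum.mpr z.2).exists_hasEigenvector
  choose v hv using hT
  have := T.finite_spectrum.fintype
  rw [← Nat.card_coe_set_eq, Nat.card_eq_fintype_card]
  exact (End.eigenvectors_linearIndependent T _ v hv).fintype_card_le_finrank

theorem aeval_eq_zero_of_pow_eq_one [FiniteDimensional K V] {n : ℕ} [NeZero n]
    [HasEnoughRootsOfUnity K n] {T : End K V} (hT : T ^ n = 1) {Q : K[X]}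
    (hQ : ∀ z ∈ spectrum K T, Q.IsRoot z) : aeval T Q = 0 := by
  obtain rfl | hQ0 := eq_or_ne Q 0
  · exact map_zero _
  obtain ⟨ζ, hζ⟩ := HasEnoughRootsOfUnity.exists_primitiveRoot K n
  have hdvd : minpoly K T ∣ X ^ n - 1 := minpoly.dvd K T (by simp [hT])
  have hsep : (X ^ n - 1 : K[X]).Separable := X_pow_sub_one_separable_iff.mpr hζ.neZero'.ne
  have hsplits : (X ^ n - 1 : K[X]).Splits := by simpa using X_pow_sub_one_splits hζ
  have hmin : minpoly K T ≠ 0 := ne_zero_of_dvd_ne_zero hsep.ne_zero hdvd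
  have hroots : (minpoly K T).roots ≤ Q.roots := by
    refine (Multiset.le_iff_subset (nodup_roots (hsep.of_dvd hdvd))).mpr fun z hz => ?_
    exact (mem_roots hQ0).mpr
      (hQ z (End.hasEigenvalue_of_isRoot (isRoot_of_mem_roots hz)).mem_spectrum)
  exact aeval_eq_zero_of_dvd_aeval_eq_zero
    ((hsplits.of_dvd hsep.ne_zero hdvd).dvd_of_roots_le_roots hmin hroots) (minpoly.aeval K T)

theorem pow_three_mul_eq_one_of_sq_eq_smul [Nontrivial V] {T S : End K V} {e q : K}
    (hS : S * S = e • 1) (he : e ≠ 0) (hbraid : T * S * T * S * T = S) (hT : T * T = q • 1) :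
    q ^ 3 * e = 1 := by
  have hTS : T * S = q • (S * T * S * T) := by
    calc T * S = T * T * (S * T * S * T) := by
          conv_lhs => rw [← hbraid]
          simp only [mul_assoc]
      _ = q • (S * T * S * T) := by rw [hT, smul_one_mul]
  have hTST : T * S * T = q ^ 2 • (S * T * S) := by
    rw [hTS, smul_mul_assoc, mul_assoc _ T T, hT, mul_smul_one, smul_smul, sq]
  have hSq : (q ^ 3 * e) • S = S := by
    calc (q ^ 3 * e) • S = q ^ 2 • (S * T * (S * S) * T) := by
          rw [hS, mul_smul_one, smul_mul_assoc, mul_assoc, hT, mul_smul_one, smul_smul, smul_smul]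
          ring_nf
      _ = T * S * T * S * T := by rw [hTST]; simp only [smul_mul_assoc, mul_assoc]
      _ = S := hbraid
  have h := congrArg (· * S) hSq
  simp only [smul_mul_assoc, hS, smul_smul] at h
  exact mul_right_cancel₀ he ((smul_left_injective K one_ne_zero h).trans (one_mul e).symm)

theorem exists_mem_spectrum_pow_ne [FiniteDimensional K V] {n : ℕ} [NeZero n]
    [HasEnoughRootsOfUnity K n] {T : End K V} (hT : T ^ n = 1) {k : ℕ} {a : K}
    (ha : T ^ k ≠ a • 1) : ∃ z ∈ spectrum K T, z ^ k ≠ a := by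
  contrapose! ha
  have h := aeval_eq_zero_of_pow_eq_one hT (Q := X ^ k - C a) fun z hz => by simp [ha z hz]
  rwa [map_sub, aeval_X_pow, aeval_C, Algebra.algebraMap_eq_smul_one, sub_eq_zero] at h

theorem exists_spectrum_eq_insert_neg_pair [FiniteDimensional K V] {m : ℕ} [NeZero m]
    [HasEnoughRootsOfUnity K (2 * m)] {T : End K V} (hT : T ^ (2 * m) = 1) (hTm : T ^ m ≠ 1)
    (hT2 : ∀ z : K, z ^ m = -1 → T ^ 2 ≠ z ^ 2 • 1)
    (hpow : ∀ z ∈ spectrum K T, z ^ (m + 1) ∈ spectrum K T) (hcard : (spectrum K T).ncard ≤ 3) :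
    ∃ l n : K, l ^ m = -1 ∧ n ^ m = 1 ∧ spectrum K T = {l, -l, n} ∧
      (spectrum K T).ncard = 3 := by
  have h2 := neg_one_ne_one_of_hasEnoughRootsOfUnity_two_mul K m
  have hm {z : K} (hz : z ∈ spectrum K T) : z ^ m = 1 ∨ z ^ m = -1 :=
    sq_eq_one_iff.mp <| by
      rw [← pow_mul, mul_comm]
      exact pow_eq_one_of_mem_spectrum hT hz
  have hneg {z : K} (hz : z ∈ spectrum K T) (hzm : z ^ m = -1) : -z ∈ spectrum K T := by
    simpa [pow_succ, hzm] using hpow z hz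
  have hne {z : K} (hzm : z ^ m = -1) : z ≠ -z := by
    intro h
    have hz : z = 0 := mul_left_cancel₀ (sub_ne_zero.mpr h2.symm) (by linear_combination h)
    rw [hz, zero_pow (NeZero.ne m), zero_eq_neg] at hzm
    exact one_ne_zero hzm
  obtain ⟨l, hl, hlm⟩ := exists_mem_spectrum_pow_ne hT (k := m) (a := 1) (by rwa [one_smul])
  replace hlm : l ^ m = -1 := (hm hl).resolve_left hlm
  obtain ⟨n, hn, hnl⟩ := exists_mem_spectrum_pow_ne hT (hT2 l hlm)
  rw [Ne, sq_eq_sq_iff_eq_or_eq_neg, not_or] at hnl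
  have hcard3 : ({l, -l, n} : Set K).ncard = 3 := by
    rw [Set.ncard_eq_three]
    exact ⟨l, -l, n, hne hlm, Ne.symm hnl.1, Ne.symm hnl.2, rfl⟩
  have hspec : spectrum K T = {l, -l, n} := by
    refine (Set.eq_of_subset_of_ncard_le ?_ (hcard.trans hcard3.ge) T.finite_spectrum).symm
    rintro z (rfl | rfl | rfl)
    exacts [hl, hneg hl hlm, hn]
  refine ⟨l, n, hlm, (hm hn).resolve_right fun hnm => ?_, hspec,
    hspec ▸ hcard3⟩
  rcases hspec ▸ hneg hn hnm with h | h | h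
  · exact hnl.2 (neg_eq_iff_eq_neg.mp h)
  · exact hnl.1 (neg_injective h)
  · exact hne hnm (Eq.symm h)

theorem exists_apply_eq_self_and_apply_eq_neg {U S : End K V} {e : K} (hS : S * S = e • 1)
    (he : e ≠ 0) (hU : U * U = 1) (hcomm : Commute U (S * U * S)) {v : V} (hv : U v = v)
    (hSv : U (S v) ≠ S v) : ∃ w ≠ 0, U w = w ∧ U (S w) = -S w := by
  have hS' (x : V) : S (S x) = e • x := congr($hS x)
  have hU' (x : V) : U (U x) = x := congr($hU x)
  have hcomm' : U (S (U (S v))) = S (U (S v)) := by simpa [hv] using congr($hcomm v)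
  have hSw : S (S (U (S v)) - e • v) = e • (U (S v) - S v) := by
    rw [map_sub, hS', map_smul, smul_sub]
  -- `w` is chosen so that `S w` is `e` times the difference `U (S v) - S v`, which `U` negates.
  refine ⟨S (U (S v)) - e • v, fun hw => ?_, ?_, ?_⟩
  · rw [hw, map_zero] at hSw
    exact smul_ne_zero he (sub_ne_zero.mpr hSv) hSw.symm
  · rw [map_sub, map_smul, hcomm', hv]
  · rw [hSw, map_smul, map_sub, hU', ← smul_neg, neg_sub]

theorem aeval_apply_eq_zero_of_pow_ne {T : End K V} {p q : K[X]} {a b : K} {k : ℕ} {w : V}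
    (hqp : aeval T ((q - C a) * p) = 0) (hw : aeval T (q ^ k) w = b • w) (hab : a ^ k ≠ b) :
    aeval T p w = 0 := by
  set y := aeval T p w with hy
  have ha : aeval T q y = a • y := by
    simpa [sub_eq_zero, Algebra.algebraMap_eq_smul_one] using congr($hqp w)
  have hak : aeval T (q ^ k) y = a ^ k • y := by
    simpa using End.aeval_apply_of_mem_apply_eq_smul (p := X ^ k) ha
  have hb : aeval T (q ^ k) y = b • y := by
    rw [hy, ← End.mul_apply, ← map_mul, mul_comm, map_mul, End.mul_apply, hw, map_smul]
  by_contra h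
  exact hab (smul_left_injective K h (hak.symm.trans hb))

theorem exists_apply_eq_smul_and_sq_apply_eq_smul (h2 : (-1 : K) ≠ 1) {T S : End K V} {a n e : K}
    {k : ℕ} (hS : S * S = e • 1) (he : e ≠ 0) (hT : T ^ (2 * k) * T ^ (2 * k) = 1)
    (hcomm : Commute (T ^ (2 * k)) (S * T ^ (2 * k) * S)) (hak : a ^ k = -1)
    (hnk : n ^ (2 * k) = 1) (hcubic : aeval T ((X ^ 2 - C a) * (X - C n)) = 0) {v : V}
    (hv : (T ^ (2 * k)) v = v) (hSv : (T ^ (2 * k)) (S v) ≠ S v) :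
    ∃ w ≠ 0, T w = n • w ∧ T (T (S w)) = a • S w := by
  obtain ⟨w, hw0, hw, hSw⟩ := exists_apply_eq_self_and_apply_eq_neg hS he hT hcomm hv hSv
  have hTw : aeval T (X - C n) w = 0 :=
    aeval_apply_eq_zero_of_pow_ne (b := 1) (k := k) hcubic (by simpa [← pow_mul] using hw)
      (by rwa [hak])
  have hTTSw : aeval T (X ^ 2 - C a) (S w) = 0 :=
    aeval_apply_eq_zero_of_pow_ne (b := -1) (k := 2 * k) (mul_comm _ (X - C n) ▸ hcubic)
      (by simpa using hSw) (by rw [hnk]; exact h2.symm)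
  refine ⟨w, hw0, ?_, ?_⟩
  · simpa [sub_eq_zero] using hTw
  · simpa [sub_eq_zero, sq] using hTTSw

section InvariantSpan

variable {T S : End K V} {a n e : K} {w : V}

theorem apply_apply_apply_eq_smul_of_braid (hT : Function.Injective T)
    (hbraid : T * S * T * S * T = S) (hn : n ≠ 0) (ha : a ≠ 0) (hw : T w = n • w)
    (hSw : T (T (S w)) = a • S w) : S (T (S w)) = (n * a)⁻¹ • T (S w) := by
  have hTSTS : n • T (S (T (S w))) = S w := by simpa [hw] using congr($hbraid w)
  apply hT
  rw [map_smul, hSw, smul_smul, mul_inv, inv_mul_cancel_right₀ ha, eq_inv_smul_iff₀ hn, hTSTS]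

theorem finrank_le_three_of_apply_eq_smul {c : K}
    (hirr : ∀ W ∈ T.invtSubmodule, W ∈ S.invtSubmodule → W = ⊥ ∨ W = ⊤) (hw0 : w ≠ 0)
    (hw : T w = n • w) (hTTS : T (T (S w)) = a • S w) (hSS : S (S w) = e • w)
    (hSTS : S (T (S w)) = c • T (S w)) : finrank K V ≤ 3 := by
  let b : Fin 3 → V := ![w, S w, T (S w)]
  have hb (i : Fin 3) (x : K) : x • b i ∈ Submodule.span K (Set.range b) :=
    Submodule.smul_mem _ x (Submodule.subset_span (Set.mem_range_self i))
  have hTb : Submodule.span K (Set.range b) ∈ T.invtSubmodule := by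
    rw [End.mem_invtSubmodule, Submodule.span_le, Set.range_subset_iff, Fin.forall_fin_succ,
      Fin.forall_fin_two]
    exact ⟨by simpa [b, hw] using hb 0 n, by simpa [b] using hb 2 1,
      by simpa [b, hTTS] using hb 1 a⟩
  have hSb : Submodule.span K (Set.range b) ∈ S.invtSubmodule := by
    rw [End.mem_invtSubmodule, Submodule.span_le, Set.range_subset_iff, Fin.forall_fin_succ,
      Fin.forall_fin_two]
    exact ⟨by simpa [b] using hb 1 1, by simpa [b, hSS] using hb 0 e,
      by simpa [b, hSTS] using hb 2 c⟩
  have htop : Submodule.span K (Set.range b) = ⊤ := (hirr _ hTb hSb).resolve_left fun h =>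
    hw0 ((Submodule.mem_bot K).mp (h ▸ by simpa [b] using hb 0 1))
  rw [← finrank_top, ← htop]
  exact finrank_range_le_card b

theorem sq_eq_of_apply_eq_smul {S : End K V} {e c : K} {v : V} (hS : S * S = e • 1)
    (hv : v ≠ 0) (hc : S v = c • v) : c ^ 2 = e := by
  have h : S (S v) = e • v := congr($hS v)
  rw [hc, map_smul, hc, smul_smul, ← sq] at h
  exact smul_left_injective K hv h

end InvariantSpan

theorem exists_apply_eq_self_and_apply_ne {T S U : End K V}
    (hirr : ∀ W ∈ T.invtSubmodule, W ∈ S.invtSubmodule → W = ⊥ ∨ W = ⊤) (hTU : Commute U T)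
    (hU : U ≠ 1) {x : V} (hx0 : x ≠ 0) (hx : U x = x) : ∃ v, U v = v ∧ U (S v) ≠ S v := by
  by_contra! h
  have hker {v : V} : v ∈ LinearMap.ker (U - 1) ↔ U v = v := by simp [sub_eq_zero]
  have hT : LinearMap.ker (U - 1) ∈ T.invtSubmodule := fun v hv => hker.mpr <| by
    have hv' : U (T v) = T (U v) := congr($hTU v)
    rw [hv', hker.mp hv]
  rcases hirr _ hT fun v hv => hker.mpr (h v (hker.mp hv)) with hbot | htop
  · exact hx0 ((Submodule.mem_bot K).mp (hbot ▸ hker.mpr hx))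
  · exact hU (sub_eq_zero.mp (LinearMap.ker_eq_top.mp htop))

theorem finrank_le_three_and_sq_mul_eq_one (h2 : (-1 : K) ≠ 1) {T S : End K V} {a n e : K} {k : ℕ}
    (hirr : ∀ W ∈ T.invtSubmodule, W ∈ S.invtSubmodule → W = ⊥ ∨ W = ⊤)
    (hS : S * S = e • 1) (he : e ≠ 0) (hbraid : T * S * T * S * T = S)
    (hTT : T ^ (2 * k) * T ^ (2 * k) = 1) (hT : T ^ (2 * k) ≠ 1)
    (hcomm : Commute (T ^ (2 * k)) (S * T ^ (2 * k) * S)) (hak : a ^ k = -1)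
    (hnk : n ^ (2 * k) = 1) (hn : T.HasEigenvalue n)
    (hcubic : aeval T ((X ^ 2 - C a) * (X - C n)) = 0) :
    finrank K V ≤ 3 ∧ (n * a) ^ 2 * e = 1 := by
  have hk : k ≠ 0 := by
    rintro rfl
    simp at hT
  have hn0 : n ≠ 0 := by
    rintro rfl
    simp [hk] at hnk
  have ha0 : a ≠ 0 := by
    rintro rfl
    simp [hk] at hak
  have hTinj : Function.Injective T := by
    rw [← pow_add] at hTT
    exact ((Module.End.isUnit_iff T).mp (.of_pow_eq_one hTT (by lia))).injective
  obtain ⟨x, hx⟩ := hn.exists_hasEigenvector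
  have hUx : (T ^ (2 * k)) x = x := by rw [hx.pow_apply, hnk, one_smul]
  obtain ⟨v, hv, hSv⟩ :=
    exists_apply_eq_self_and_apply_ne hirr (Commute.pow_self T (2 * k)) hT hx.2 hUx
  obtain ⟨w, hw0, hw, hTTS⟩ :=
    exists_apply_eq_smul_and_sq_apply_eq_smul h2 hS he hTT hcomm hak hnk hcubic hv hSv
  have hSS : S (S w) = e • w := congr($hS w)
  have hSTS := apply_apply_apply_eq_smul_of_braid hTinj hbraid hn0 ha0 hw hTTS
  have hTSw : T (S w) ≠ 0 := fun h => smul_ne_zero he hw0 <| by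
    rw [← hSS, hTinj (h.trans (map_zero T).symm), map_zero]
  refine ⟨finrank_le_three_of_apply_eq_smul hirr hw0 hw hTTS hSS hSTS, ?_⟩
  rw [← sq_eq_of_apply_eq_smul hS hTSw hSTS, ← mul_pow, mul_inv_cancel₀ (mul_ne_zero hn0 ha0),
    one_pow]

end Spectrum

section SpecialLinear

open Matrix SpecialLinearGroup
open scoped MatrixGroups

variable {R : Type*} [CommRing R]

/-- The upper unipotent matrix `[[1, x], [0, 1]]`. -/
abbrev upperTransvection (x : R) : SL(2, R) := transvection zero_ne_one x

/-- The lower unipotent matrix `[[1, 0], [x, 1]]`. -/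
abbrev lowerTransvection (x : R) : SL(2, R) := transvection one_ne_zero x

theorem coe_upperTransvection (x : R) : (upperTransvection x : Matrix _ _ R) = !![1, x; 0, 1] := by
  ext i j
  fin_cases i <;> fin_cases j <;> simp [transvection_coe]

theorem coe_lowerTransvection (x : R) : (lowerTransvection x : Matrix _ _ R) = !![1, 0; x, 1] := by
  ext i j
  fin_cases i <;> fin_cases j <;> simp [transvection_coe]

theorem eq_upper_mul_lower_mul_upper (g : SL(2, R)) {u : R} (hu : u * g 1 0 = 1) :
    g = upperTransvection (u * (g 0 0 - 1)) * lowerTransvection (g 1 0) *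
      upperTransvection (u * (g 1 1 - 1)) := by
  have hdet := g.det_coe
  rw [det_fin_two] at hdet
  ext i j
  fin_cases i <;> fin_cases j <;>
    simp [coe_upperTransvection, coe_lowerTransvection, Matrix.mul_apply, Fin.sum_univ_two]
  · linear_combination (1 - g 0 0) * hu
  · linear_combination (-g 0 1 - u * (g 0 0 - 1) * (g 1 1 - 1)) * hu - u * hdet
  · linear_combination (1 - g 1 1) * hu

theorem eq_top_of_transvections_mem [IsLocalRing R] {H : Subgroup SL(2, R)}
    (hU : ∀ x, upperTransvection x ∈ H) (hL : ∀ x, lowerTransvection x ∈ H) : H = ⊤ := by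
  have hunit (g : SL(2, R)) (hg : IsUnit (g 1 0)) : g ∈ H := by
    obtain ⟨u, hu⟩ := hg.exists_left_inv
    rw [eq_upper_mul_lower_mul_upper g hu]
    exact mul_mem (mul_mem (hU _) (hL _)) (hU _)
  refine (Subgroup.eq_top_iff' H).mpr fun g => ?_
  by_cases hc : IsUnit (g 1 0)
  · exact hunit g hc
  refine (mul_mem_cancel_left (hL 1)).mp (hunit _ ?_)
  have hLg : (lowerTransvection 1 * g : SL(2, R)) 1 0 = g 0 0 + g 1 0 := by
    simp [Matrix.mul_apply, coe_lowerTransvection, Fin.sum_univ_two]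
  by_contra hac
  replace hc : g 1 0 ∈ IsLocalRing.maximalIdeal R := hc
  have ha : g 0 0 ∈ IsLocalRing.maximalIdeal R := (add_mem_cancel_right hc).mp (hLg ▸ hac)
  refine (Ideal.ne_top_iff_one _).mp (IsLocalRing.maximalIdeal.isMaximal R).ne_top ?_
  rw [← g.det_coe, det_fin_two]
  exact sub_mem (Ideal.mul_mem_right _ _ ha) (Ideal.mul_mem_left _ _ hc)

theorem specialLinearGroup_map_transvection {n S : Type*} [Fintype n] [DecidableEq n] [CommRing S]
    (f : R →+* S) {i j : n} (hij : i ≠ j) (x : R) :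
    SpecialLinearGroup.map f (transvection hij x) = transvection hij (f x) := by
  ext k l
  simp [transvection_coe, Matrix.one_apply, Matrix.single_apply, apply_ite f]

theorem specialLinearGroup_map_surjective {S : Type*} [CommRing S] [IsLocalRing S] {f : R →+* S}
    (hf : Function.Surjective f) :
    Function.Surjective (SpecialLinearGroup.map (n := Fin 2) f) := by
  refine MonoidHom.range_eq_top.mp (eq_top_of_transvections_mem (fun y => ?_) fun y => ?_)
  all_goals
    obtain ⟨x, rfl⟩ := hf y
    exact ⟨_, specialLinearGroup_map_transvection f _ x⟩

theorem eq_lower_mul_conj_upper_mul_upper (g : SL(2, R)) {u : R} (hu : u * g 0 0 = 1) :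
    g = lowerTransvection (u * (g 1 0 + g 0 0 - 1)) * ((lowerTransvection 1)⁻¹ *
      upperTransvection (g 0 0 - 1) * lowerTransvection 1) *
        upperTransvection (u * (g 0 1 - g 0 0 + 1)) := by
  rw [transvection_inv]
  have hdet := g.det_coe
  rw [det_fin_two] at hdet
  ext i j
  fin_cases i <;> fin_cases j <;>
    simp [coe_upperTransvection, coe_lowerTransvection, Matrix.mul_apply, Fin.sum_univ_two]
  · linear_combination -(g 0 1 - g 0 0 + 1) * hu
  · linear_combination -(g 1 0 + g 0 0 - 1) * hu
  · linear_combination (-(g 1 0 + g 0 0 - 1) * (u * (g 0 1 - g 0 0 + 1)) - g 1 1 + 2 - g 0 0) * hu +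
      u * hdet

/-- The matrix `[[0, -1], [1, 0]]`, called `s` in the theory of modular representations. -/
def weylElement (R : Type*) [CommRing R] : SL(2, R) := ⟨!![0, -1; 1, 0], by simp⟩

theorem coe_weylElement : (weylElement R : Matrix (Fin 2) (Fin 2) R) = !![0, -1; 1, 0] := rfl

theorem weylElement_mul_self : weylElement R * weylElement R = -1 := by
  ext i j
  fin_cases i <;> fin_cases j <;> simp [coe_weylElement]

theorem upperTransvection_braid : upperTransvection (1 : R) * weylElement R * upperTransvection 1 *
    weylElement R * upperTransvection 1 = weylElement R := by
  ext i j
  fin_cases i <;> fin_cases j <;> simp [coe_weylElement, coe_upperTransvection]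

theorem weylElement_conj_upperTransvection (x : R) :
    weylElement R * upperTransvection (-x) * (weylElement R)⁻¹ = lowerTransvection x := by
  rw [mul_inv_eq_iff_eq_mul]
  ext i j
  fin_cases i <;> fin_cases j <;>
    simp [coe_weylElement, coe_upperTransvection, coe_lowerTransvection]

theorem isConj_upperTransvection (u : Rˣ) (x : R) :
    IsConj (upperTransvection x) (upperTransvection (u ^ 2 * x)) := by
  let d : SL(2, R) := ⟨!![(u : R), 0; 0, ↑u⁻¹], by simp⟩
  have hd : (d : Matrix (Fin 2) (Fin 2) R) = !![(u : R), 0; 0, ↑u⁻¹] := rfl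
  refine isConj_iff.mpr ⟨d, mul_inv_eq_iff_eq_mul.mpr ?_⟩
  ext i j
  fin_cases i <;> fin_cases j <;>
    simp [hd, coe_upperTransvection, sq, mul_right_comm _ x]

theorem commute_upperTransvection_weylElement_conj {x : R} (hx : x * x = 0) :
    Commute (upperTransvection x) (weylElement R * upperTransvection x * weylElement R) := by
  ext i j
  fin_cases i <;> fin_cases j <;> simp [coe_weylElement, coe_upperTransvection, hx]

theorem upperTransvection_natCast (k : ℕ) :
    upperTransvection (k : R) = upperTransvection 1 ^ k := by
  induction k with
  | zero => simp
  | succ k ih => rw [Nat.cast_succ, pow_succ, ← ih, ← transvection_add]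

theorem specialLinearGroup_ker_map_le {S : Type*} [CommRing S] {f : R →+* S} [IsLocalHom f]
    {N : Subgroup SL(2, R)} [N.Normal] (hN : ∀ x, f x = 0 → upperTransvection x ∈ N) :
    (SpecialLinearGroup.map (n := Fin 2) f).ker ≤ N := by
  have hL (x : R) (hx : f x = 0) : lowerTransvection x ∈ N := by
    rw [← weylElement_conj_upperTransvection]
    exact ‹N.Normal›.conj_mem _ (hN _ (by rw [map_neg, hx, neg_zero])) _
  intro g hg
  have hf (i j : Fin 2) : f (g i j) = (1 : Matrix (Fin 2) (Fin 2) S) i j := congr($hg i j)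
  have h00 : f (g 0 0) = 1 := hf 0 0
  have h01 : f (g 0 1) = 0 := hf 0 1
  have h10 : f (g 1 0) = 0 := hf 1 0
  obtain ⟨u, hu⟩ := ((isUnit_map_iff f _).mp (h00 ▸ isUnit_one)).exists_left_inv
  rw [eq_lower_mul_conj_upper_mul_upper g hu]
  refine mul_mem (mul_mem (hL _ ?_) (‹N.Normal›.conj_mem' _ (hN _ ?_) _)) (hN _ ?_) <;>
    simp [h00, h01, h10]

end SpecialLinear

section ZModSL

open Matrix SpecialLinearGroup

theorem tGen_eq_upperTransvection (n : ℕ) : tGen n = upperTransvection 1 :=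
  Subtype.ext (coe_upperTransvection 1).symm

theorem tGen_pow (n k : ℕ) : tGen n ^ k = upperTransvection (k : ZMod n) := by
  rw [tGen_eq_upperTransvection, upperTransvection_natCast]

theorem tGen_pow_self (n : ℕ) : tGen n ^ n = 1 := by
  rw [tGen_pow, ZMod.natCast_self]
  exact transvection_coeff_zero zero_ne_one

theorem tGen_braid (n : ℕ) :
    tGen n * weylElement (ZMod n) * tGen n * weylElement (ZMod n) * tGen n =
      weylElement (ZMod n) := by
  rw [tGen_eq_upperTransvection, upperTransvection_braid]

theorem isConj_tGen_pow_sq {n u : ℕ} (hu : u.Coprime n) : IsConj (tGen n) (tGen n ^ u ^ 2) := by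
  rw [tGen_pow, tGen_eq_upperTransvection]
  simpa using isConj_upperTransvection (ZMod.unitOfCoprime u hu) 1

theorem commute_tGen_pow_weylElement_conj {n k : ℕ} (h : n ∣ k * k) :
    Commute (tGen n ^ k) (weylElement (ZMod n) * tGen n ^ k * weylElement (ZMod n)) := by
  rw [tGen_pow]
  refine commute_upperTransvection_weylElement_conj ?_
  rwa [← Nat.cast_mul, ZMod.natCast_eq_zero_iff]

theorem isLocalRing_zmod_prime_pow (p : ℕ) [Fact p.Prime] {k : ℕ} (hk : k ≠ 0) :
    IsLocalRing (ZMod (p ^ k)) := by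
  have hp : p.Prime := Fact.out
  have : IsLocalHom (ZMod.castHom (dvd_pow_self p hk) (ZMod p)) := by
    refine ⟨fun x hx => ?_⟩
    rw [← ZMod.natCast_rightInverse x,
      ZMod.isUnit_natCast_iff_not_dvd_pow hp (Nat.pos_of_ne_zero hk)]
    rwa [← ZMod.natCast_rightInverse x, map_natCast, isUnit_iff_ne_zero, Ne,
      ZMod.natCast_eq_zero_iff] at hx
  exact RingHom.domain_isLocalRing (ZMod.castHom (dvd_pow_self p hk) (ZMod p))

theorem closure_tGen_weylElement (n : ℕ) [NeZero n] [IsLocalRing (ZMod n)] :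
    Subgroup.closure {tGen n, weylElement (ZMod n)} = ⊤ := by
  set H := Subgroup.closure {tGen n, weylElement (ZMod n)}
  have ht : tGen n ∈ H := Subgroup.subset_closure (Set.mem_insert _ _)
  have hs : weylElement (ZMod n) ∈ H := Subgroup.subset_closure (Set.mem_insert_of_mem _ rfl)
  have hU (x : ZMod n) : upperTransvection x ∈ H := by
    rw [← ZMod.natCast_rightInverse x, ← tGen_pow]
    exact pow_mem ht _
  refine eq_top_of_transvections_mem hU fun x => ?_
  rw [← weylElement_conj_upperTransvection]
  exact mul_mem (mul_mem hs (hU _)) (inv_mem hs)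

theorem exists_eq_comp_of_ker_le {G H M : Type*} [Group G] [Group H] [Monoid M] {f : G →* H}
    (hf : Function.Surjective f) {g : G →* M} (hfg : f.ker ≤ g.ker) :
    ∃ g' : H →* M, g = g'.comp f := by
  refine ⟨(QuotientGroup.lift f.ker g hfg).comp
    (QuotientGroup.quotientKerEquivOfSurjective f hf).symm.toMonoidHom, ?_⟩
  ext x
  have hx : QuotientGroup.quotientKerEquivOfSurjective f hf x = f x := rfl
  simp [← hx]

theorem exists_eq_comp_map_castHom {m n : ℕ} (h : m ∣ n) [NeZero n] [IsLocalRing (ZMod n)]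
    [Nontrivial (ZMod m)] {M : Type*} [Monoid M] {f : SL2 n →* M} (hf : f (tGen n ^ m) = 1) :
    ∃ f' : SL2 m →* M, f = f'.comp (SpecialLinearGroup.map (ZMod.castHom h (ZMod m))) := by
  have hsurj := ZMod.castHom_surjective h
  have : IsLocalRing (ZMod m) := .of_surjective' _ hsurj
  have : IsLocalHom (ZMod.castHom h (ZMod m)) := .of_surjective _ hsurj
  refine exists_eq_comp_of_ker_le (specialLinearGroup_map_surjective hsurj)
    (specialLinearGroup_ker_map_le fun x hx => ?_)
  obtain ⟨k, hk⟩ : m ∣ x.val := by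
    rwa [← ZMod.natCast_rightInverse x, map_natCast, ZMod.natCast_eq_zero_iff] at hx
  rw [← ZMod.natCast_rightInverse x, ← tGen_pow, MonoidHom.mem_ker, hk, pow_mul, map_pow, hf,
    one_pow]

end ZModSL

section Irreducible

open Module

theorem IsIrreducibleRep.isIrreducible {G V : Type} [Group G] [AddCommGroup V] [Module ℂ V]
    {ρ : Representation ℂ G V} (h : IsIrreducibleRep ρ) : ρ.IsIrreducible where
  toNontrivial := by
    have := h.1
    exact ⟨⊥, ⊤, fun hbt => bot_ne_top (congrArg Subrepresentation.toSubmodule hbt)⟩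
  eq_bot_or_eq_top σ :=
    (h.2 σ.toSubmodule fun g => Submodule.map_le_iff_le_comap.mpr (σ.apply_mem_toSubmodule g)).imp
      (fun hσ => Subrepresentation.toSubmodule_injective hσ)
      fun hσ => Subrepresentation.toSubmodule_injective hσ

variable {K G V : Type*} [Field K] [AddCommGroup V] [Module K V]

theorem eq_bot_or_eq_top_of_mem_invtSubmodule [Monoid G] {ρ : Representation K G V}
    [ρ.IsIrreducible] {s : Set G} (hs : Submonoid.closure s = ⊤) {W : Submodule K V}
    (hW : ∀ g ∈ s, W ∈ End.invtSubmodule (ρ g)) : W = ⊥ ∨ W = ⊤ := by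
  have hWG (g : G) : W ∈ End.invtSubmodule (ρ g) := by
    induction hs.symm ▸ Submonoid.mem_top g using Submonoid.closure_induction with
    | mem g hg => exact hW g hg
    | one =>
      rw [map_one]
      exact fun v hv => hv
    | mul g h _ _ hg hh =>
      rw [map_mul]
      exact fun v hv => hg (hh hv)
  let σ : Subrepresentation ρ := ⟨W, fun g _ hv => hWG g hv⟩
  exact (eq_bot_or_eq_top σ).imp (congrArg Subrepresentation.toSubmodule)
    (congrArg Subrepresentation.toSubmodule)

theorem eq_one_or_eq_neg_one_of_mem_center [Monoid G] (ρ : Representation K G V)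
    [ρ.IsIrreducible] {z : G} (hz : z ∈ Submonoid.center G) (hz2 : z * z = 1) :
    ρ z = 1 ∨ ρ z = -1 := by
  have hsq (v : V) : ρ z (ρ z v) = v := by rw [← End.mul_apply, ← map_mul, hz2, map_one]; rfl
  have hcomm (g : G) : Commute (ρ z) (ρ g) :=
    (show Commute z g from (Submonoid.mem_center_iff.mp hz g).symm).map ρ
  have hinv (g : G) : LinearMap.ker (ρ z - 1) ∈ End.invtSubmodule (ρ g) := by
    intro v hv
    have hv' : ρ z v = v := by simpa [sub_eq_zero] using hv
    have h : ρ z (ρ g v) = ρ g (ρ z v) := congr($(hcomm g) v)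
    simp [h, hv']
  rcases eq_bot_or_eq_top_of_mem_invtSubmodule Submonoid.closure_univ fun g _ => hinv g with h | h
  · right
    ext v
    have hv : ρ z v + v ∈ LinearMap.ker (ρ z - 1) := by simp [hsq, add_comm]
    rw [h, Submodule.mem_bot] at hv
    exact eq_neg_of_add_eq_zero_left hv
  · exact .inl (sub_eq_zero.mp (LinearMap.ker_eq_top.mp h))

theorem nontrivial_of_isIrreducible [Monoid G] (ρ : Representation K G V) [ρ.IsIrreducible] :
    Nontrivial V :=
  IsSimpleModule.nontrivial (MonoidAlgebra K G) ρ.asModule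

theorem finiteDimensional_of_isIrreducible [Group G] [Finite G] (ρ : Representation K G V)
    [ρ.IsIrreducible] : FiniteDimensional K V := by
  have : Module.Finite (MonoidAlgebra K G) ρ.asModule := inferInstance
  exact Module.Finite.trans (R := K) (MonoidAlgebra K G) ρ.asModule

end Irreducible

section ModularRepresentation

open Module Polynomial

variable {K V : Type*} [Field K] [AddCommGroup V] [Module K V]

theorem eq_bot_or_eq_top_of_mem_invtSubmodule_tGen_weylElement {n : ℕ} [NeZero n]
    [IsLocalRing (ZMod n)] (ρ : Representation K (SL2 n) V) [ρ.IsIrreducible] (W : Submodule K V)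
    (hT : W ∈ End.invtSubmodule (ρ (tGen n)))
    (hS : W ∈ End.invtSubmodule (ρ (weylElement (ZMod n)))) : W = ⊥ ∨ W = ⊤ := by
  refine eq_bot_or_eq_top_of_mem_invtSubmodule (ρ := ρ) (s := {tGen n, weylElement (ZMod n)}) ?_ ?_
  · rw [← Subgroup.closure_toSubmonoid_of_finite, closure_tGen_weylElement,
      Subgroup.top_toSubmonoid]
  · rintro g (rfl | rfl)
    exacts [hT, hS]

theorem exists_weylElement_mul_self_eq_smul {R : Type*} [CommRing R]
    (ρ : Representation K (Matrix.SpecialLinearGroup (Fin 2) R) V) [ρ.IsIrreducible] :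
    ∃ e : K, e ^ 2 = 1 ∧ ρ (weylElement R) * ρ (weylElement R) = e • 1 := by
  rw [← map_mul, weylElement_mul_self]
  rcases eq_one_or_eq_neg_one_of_mem_center ρ (z := -1)
    (Submonoid.mem_center_iff.mpr fun g => by simp) (by simp) with h | h
  · exact ⟨1, one_pow 2, by rw [h, one_smul]⟩
  · exact ⟨-1, neg_one_sq, by rw [h, neg_smul, one_smul]⟩

theorem pow_six_eq_one_of_sq_tGen_eq_smul {n : ℕ} (ρ : Representation K (SL2 n) V)
    [ρ.IsIrreducible] {q : K} (hq : ρ (tGen n) ^ 2 = q • 1) : q ^ 6 = 1 := by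
  have := nontrivial_of_isIrreducible ρ
  obtain ⟨e, he, hS⟩ := exists_weylElement_mul_self_eq_smul ρ
  have he0 : e ≠ 0 := ne_zero_pow two_ne_zero (he ▸ one_ne_zero)
  have hqe := pow_three_mul_eq_one_of_sq_eq_smul hS he0 (by simp only [← map_mul, tGen_braid])
    (sq (ρ (tGen n)) ▸ hq)
  linear_combination (q ^ 3 * e + 1) * hqe - q ^ 6 * he

variable [HasEnoughRootsOfUnity K 16] (ρ : Representation K (SL2 16) V) [ρ.IsIrreducible]

theorem exists_spectrum_tGen_eq (h8 : ρ (tGen 16) ^ 8 ≠ 1)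
    (h3 : (spectrum K (ρ (tGen 16))).ncard ≤ 3) :
    ∃ l n : K, l ^ 8 = -1 ∧ n ^ 8 = 1 ∧ spectrum K (ρ (tGen 16)) = {l, -l, n} ∧
      (spectrum K (ρ (tGen 16))).ncard = 3 := by
  have : HasEnoughRootsOfUnity K (2 * 8) := ‹HasEnoughRootsOfUnity K 16›
  have := finiteDimensional_of_isIrreducible ρ
  have hT : ρ (tGen 16) ^ (2 * 8) = 1 := by rw [← map_pow, tGen_pow_self, map_one]
  have hconj : IsConj (ρ (tGen 16)) (ρ (tGen 16) ^ (8 + 1)) := by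
    rw [← map_pow]
    exact ρ.map_isConj (isConj_tGen_pow_sq (u := 3) (by norm_num))
  refine exists_spectrum_eq_insert_neg_pair hT h8 (fun z hz hz2 => ?_)
    (fun z => pow_mem_spectrum_of_isConj hconj) h3
  have hz12 := pow_six_eq_one_of_sq_tGen_eq_smul ρ hz2
  refine neg_one_ne_one_of_hasEnoughRootsOfUnity_two_mul K 8 ?_
  calc -1 = (z ^ 8) ^ 3 := by rw [hz]; norm_num
    _ = ((z ^ 2) ^ 6) ^ 2 := by ring
    _ = 1 := by rw [hz12, one_pow]

theorem finrank_le_three_and_pow_four_eq_neg_one (h8 : ρ (tGen 16) ^ 8 ≠ 1) {l n : K}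
    (hl : l ^ 8 = -1) (hn : n ^ 8 = 1) (hspec : spectrum K (ρ (tGen 16)) = {l, -l, n}) :
    finrank K V ≤ 3 ∧ n ^ 4 = -1 := by
  have := finiteDimensional_of_isIrreducible ρ
  have : IsLocalRing (ZMod 16) := isLocalRing_zmod_prime_pow 2 (k := 4) (by simp)
  have : HasEnoughRootsOfUnity K (2 * 8) := ‹HasEnoughRootsOfUnity K 16›
  obtain ⟨e, he, hS⟩ := exists_weylElement_mul_self_eq_smul (R := ZMod 16) ρ
  have hT : ρ (tGen 16) ^ 16 = 1 := by rw [← map_pow, tGen_pow_self, map_one]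
  have hcubic : aeval (ρ (tGen 16)) ((X ^ 2 - C (l ^ 2)) * (X - C n)) = 0 :=
    aeval_eq_zero_of_pow_eq_one hT (by simp [hspec])
  have hcomm := (commute_tGen_pow_weylElement_conj (n := 16) (k := 8) (by norm_num)).map ρ
  simp only [map_mul, map_pow] at hcomm
  obtain ⟨hrank, hne⟩ := finrank_le_three_and_sq_mul_eq_one (k := 4)
    (neg_one_ne_one_of_hasEnoughRootsOfUnity_two_mul K 8)
    (eq_bot_or_eq_top_of_mem_invtSubmodule_tGen_weylElement ρ) hS
    (ne_zero_pow two_ne_zero (he ▸ one_ne_zero)) (by simp only [← map_mul, tGen_braid])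
    (by rw [← pow_add]; exact hT) h8 hcomm (by rwa [← pow_mul]) hn
    (End.hasEigenvalue_iff_mem_spectrum.mpr (by simp [hspec])) hcubic
  refine ⟨hrank, ?_⟩
  linear_combination -((n * l ^ 2) ^ 2 * e + 1) * hne + n ^ 4 * l ^ 8 * he + n ^ 4 * hl

end ModularRepresentation

theorem stmt10_general {K V : Type*} [Field K] [HasEnoughRootsOfUnity K 16] [AddCommGroup V]
    [Module K V] (ρ : Representation K (SL2 16) V) [ρ.IsIrreducible]
    (hnf : ¬ ∃ ρ' : Representation K (SL2 8) V,
      ρ = ρ'.comp (Matrix.SpecialLinearGroup.map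
        (ZMod.castHom (by norm_num : (8:ℕ) ∣ 16) (ZMod 8))))
    (h3 : (spectrum K (ρ (tGen 16))).ncard ≤ 3) :
    Module.finrank K V = 3 ∧ (spectrum K (ρ (tGen 16))).ncard = 3 ∧
    ∀ z ∈ spectrum K (ρ (tGen 16)), IsPrimitiveRoot z 8 ∨ IsPrimitiveRoot z 16 := by
  have : IsLocalRing (ZMod 16) := isLocalRing_zmod_prime_pow 2 (k := 4) (by simp)
  have : Nontrivial (ZMod 8) := ⟨0, 1, by decide⟩
  have : FiniteDimensional K V := finiteDimensional_of_isIrreducible ρ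
  have : HasEnoughRootsOfUnity K (2 * 8) := ‹HasEnoughRootsOfUnity K 16›
  have h2 := neg_one_ne_one_of_hasEnoughRootsOfUnity_two_mul K 8
  have h8 : ρ (tGen 16) ^ 8 ≠ 1 := fun h =>
    hnf (exists_eq_comp_map_castHom (by norm_num) (by rwa [map_pow]))
  obtain ⟨l, n, hl, hn, hspec, hcard⟩ := exists_spectrum_tGen_eq ρ h8 h3
  obtain ⟨hrank, hn4⟩ := finrank_le_three_and_pow_four_eq_neg_one ρ h8 hl hn hspec
  refine ⟨hrank.antisymm (hcard ▸ ncard_spectrum_le_finrank _), hcard, ?_⟩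
  have hprim {z : K} (hz : z ^ 8 = -1) : IsPrimitiveRoot z 16 :=
    isPrimitiveRoot_two_pow_succ_of_pow_eq_neg_one (k := 3) h2 hz
  rw [hspec]
  rintro z (rfl | rfl | rfl)
  · exact .inr (hprim hl)
  · exact .inr (hprim (by rwa [Even.neg_pow (by decide)]))
  · exact .inl (isPrimitiveRoot_two_pow_succ_of_pow_eq_neg_one (k := 2) h2 hn4)

/-- If `ρ` is an irreducible finite-dimensional complex representation of `SL(2, ℤ/16ℤ)`
that does not factor through `SL(2, ℤ/8ℤ)` and `ρ(t)` has at most three distinct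
eigenvalues, then `ρ` is three-dimensional, `ρ(t)` has exactly three distinct eigenvalues,
and each eigenvalue is a primitive 8th or primitive 16th root of unity. -/
theorem stmt10
    (V : Type) [AddCommGroup V] [Module ℂ V] [FiniteDimensional ℂ V]
    (ρ : Representation ℂ (SL2 16) V)
    (hirr : IsIrreducibleRep ρ)
    (hnf : ¬ ∃ ρ' : Representation ℂ (SL2 8) V,
      ρ = ρ'.comp (Matrix.SpecialLinearGroup.map
        (ZMod.castHom (by norm_num : (8:ℕ) ∣ 16) (ZMod 8))))
    (h3 : (spectrum ℂ (ρ (tGen 16))).ncard ≤ 3) :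
    Module.finrank ℂ V = 3 ∧ (spectrum ℂ (ρ (tGen 16))).ncard = 3 ∧
    ∀ z ∈ spectrum ℂ (ρ (tGen 16)), IsPrimitiveRoot z 8 ∨ IsPrimitiveRoot z 16 := by
  have : ρ.IsIrreducible := hirr.isIrreducible
  exact stmt10_general ρ hnf h3
end

section
/- Let a and b be nonnegative integers and set α = 2^a·(1+√2)^b ∈ ℝ, whose Galois conjugate is σ(α) = 2^a·(1−√2)^b. If α ≥ 2 and σ(α) ≥ 2, and N(α−1) divides T(α−1)² in ℤ (i.e., α−1 is an algebraic d-number), then b = 0, i.e., α ∈ ℤ. -/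
/-! Write `n` and `t` for the norm and trace of `α`. Then `α - 1` has norm `n - t + 1` and trace
`t - 2`, and both `α` and `α - 1` have discriminant `t² - 4n = (α - σ α)²`. If both are
d-numbers, both norms divide this discriminant, and they are coprime because `n ∣ t²`. Hence
`α (σ α) (α - 1) (σ α - 1)` divides `(α - σ α)²`; but when `α, σ α ≥ 2` it is also larger, so
`α = σ α`. A nonzero integer multiple of a positive power of `1 + √2` never equals its conjugate. -/

section Divisibility

variable {R : Type*} [CommRing R]

theorem isCoprime_sub_add_one_of_dvd_sq {n t : R} (h : n ∣ t ^ 2) : IsCoprime n (n - t + 1) := by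
  obtain ⟨k, hk⟩ := h
  exact ⟨k - 1 - t, 1 + t, by linear_combination -hk⟩

theorem mul_sub_add_one_dvd_sq_sub_four_mul {n t : R} (h : n ∣ t ^ 2)
    (h' : n - t + 1 ∣ (t - 2) ^ 2) : n * (n - t + 1) ∣ t ^ 2 - 4 * n := by
  refine (isCoprime_sub_add_one_of_dvd_sq h).mul_dvd (dvd_sub h (dvd_mul_left n 4)) ?_
  have hdisc : t ^ 2 - 4 * n = (t - 2) ^ 2 - 4 * (n - t + 1) := by ring
  exact hdisc ▸ dvd_sub h' (dvd_mul_left _ 4)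

theorem exists_int_pow_add_pow_eq {p q : R} {N s m : ℤ} (hs : p + q = N * s)
    (hm : p * q = N ^ 2 * m) (b : ℕ) : ∃ e : ℤ, p ^ b + q ^ b = N ^ b * e := by
  induction b using Nat.twoStepInduction with
  | zero => exact ⟨2, by norm_num⟩
  | one => exact ⟨s, by simpa only [pow_one] using hs⟩
  | more b ih ih' =>
    obtain ⟨e, he⟩ := ih
    obtain ⟨e', he'⟩ := ih'
    refine ⟨s * e' - m * e, ?_⟩
    calc p ^ (b + 2) + q ^ (b + 2)
        = (p + q) * (p ^ (b + 1) + q ^ (b + 1)) - p * q * (p ^ b + q ^ b) := by ring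
      _ = N * s * (N ^ (b + 1) * e') - N ^ 2 * m * (N ^ b * e) := by rw [hs, hm, he, he']
      _ = N ^ (b + 2) * (s * e' - m * e : ℤ) := by push_cast; ring

end Divisibility

theorem sq_sub_lt_mul_mul_sub_one {R : Type*} [CommRing R] [LinearOrder R] [IsStrictOrderedRing R]
    {α β : R} (hα : 2 ≤ α) (hβ : 2 ≤ β) :
    (α - β) ^ 2 < α * (α - 1) * (β * (β - 1)) := by
  have two_le_mul_sub_one {x : R} (hx : 2 ≤ x) : 2 ≤ x * (x - 1) := by nlinarith
  have hsum : α + β < 2 * (α * β) := by linarith [add_le_mul hα hβ]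
  calc (α - β) ^ 2 < α * (α - 1) + β * (β - 1) := by linarith
    _ ≤ α * (α - 1) * (β * (β - 1)) :=
      add_le_mul (two_le_mul_sub_one hα) (two_le_mul_sub_one hβ)

/-- A quadratic algebraic d-number, encoded by the pair `α`, `α'` of its conjugates: the norm
`N = α * α'` and the trace `T = α + α'` are integers, and `N` divides `T ^ 2`. A rational
integer is allowed, as a pair with `α = α'`. -/
def IsQuadraticDNumber {R : Type*} [Ring R] (α α' : R) : Prop :=
  ∃ N T : ℤ, (N : R) = α * α' ∧ (T : R) = α + α' ∧ N ∣ T ^ 2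

namespace IsQuadraticDNumber

theorem intCast_mul {R : Type*} [CommRing R] {α α' : R} (h : IsQuadraticDNumber α α') (x : ℤ) :
    IsQuadraticDNumber (x * α) (x * α') := by
  obtain ⟨N, T, hN, hT, hdvd⟩ := h
  refine ⟨x ^ 2 * N, x * T, ?_, ?_, ?_⟩
  · push_cast
    rw [hN]
    ring
  · push_cast
    rw [hT, mul_add]
  · rw [mul_pow]
    exact mul_dvd_mul_left _ hdvd

-- If `T ^ 2 = N * k`, then `α ^ 2 / N` is a unit of trace `k - 2` and norm `1`; the powers of
-- `α ^ 2` are treated in a form which avoids the division.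
theorem pow {R : Type*} [CommRing R] [CharZero R] {α α' : R} (h : IsQuadraticDNumber α α')
    (b : ℕ) : IsQuadraticDNumber (α ^ b) (α' ^ b) := by
  obtain ⟨N, T, hN, hT, k, hk⟩ := h
  have hkR : (T : R) ^ 2 = N * k := mod_cast hk
  obtain ⟨S, hS⟩ : ∃ S : ℤ, α ^ b + α' ^ b = S := by
    simpa using exists_int_pow_add_pow_eq (N := 1) (s := T) (m := N)
      (by simpa using hT.symm) (by simpa using hN.symm) b
  obtain ⟨e, he⟩ : ∃ e : ℤ, (α ^ 2) ^ b + (α' ^ 2) ^ b = N ^ b * e := by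
    refine exists_int_pow_add_pow_eq (s := k - 2) (m := 1) ?_ ?_ b
    · push_cast
      linear_combination hkR + 2 * hN - (T + α + α') * hT
    · rw [← mul_pow, ← hN, Int.cast_one, mul_one]
  have hNb : (N : R) ^ b = α ^ b * α' ^ b := by rw [hN, mul_pow]
  have hSsq : (S : R) ^ 2 = N ^ b * (e + 2) := by
    rw [← hS]
    linear_combination he - 2 * hNb
  exact ⟨N ^ b, S, mod_cast hNb, hS.symm, e + 2, mod_cast hSsq⟩

theorem eq_of_two_le_of_sub_one {R : Type*} [CommRing R] [LinearOrder R] [IsStrictOrderedRing R]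
    {α α' : R} (h : IsQuadraticDNumber α α') (h' : IsQuadraticDNumber (α - 1) (α' - 1))
    (hα : 2 ≤ α) (hα' : 2 ≤ α') : α = α' := by
  obtain ⟨n, t, hn, ht, hdvd⟩ := h
  obtain ⟨n', t', hn', ht', hdvd'⟩ := h'
  have hn'_eq : n' = n - t + 1 := by
    have : (n' : R) = n - t + 1 := by
      rw [hn', hn, ht]
      ring
    exact_mod_cast this
  have ht'_eq : t' = t - 2 := by
    have : (t' : R) = t - 2 := by
      rw [ht', ht]
      ring
    exact_mod_cast this
  have hdisc : ((t ^ 2 - 4 * n : ℤ) : R) = (α - α') ^ 2 := by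
    push_cast
    rw [hn, ht]
    ring
  have hnorms : ((n * n' : ℤ) : R) = α * (α - 1) * (α' * (α' - 1)) := by
    push_cast
    rw [hn, hn']
    ring
  have hdvd_disc : n * n' ∣ t ^ 2 - 4 * n := by
    rw [hn'_eq]
    exact mul_sub_add_one_dvd_sq_sub_four_mul hdvd (hn'_eq ▸ ht'_eq ▸ hdvd')
  have hlt : t ^ 2 - 4 * n < n * n' := by
    rw [← Int.cast_lt (R := R), hdisc, hnorms]
    exact sq_sub_lt_mul_mul_sub_one hα hα'
  have hnonneg : 0 ≤ t ^ 2 - 4 * n := by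
    rw [← Int.cast_nonneg_iff (R := R), hdisc]
    exact sq_nonneg _
  have hzero : (α - α') ^ 2 = 0 := by
    rw [← hdisc, Int.eq_zero_of_dvd_of_nonneg_of_lt hnonneg hlt hdvd_disc, Int.cast_zero]
  exact sub_eq_zero.mp (pow_eq_zero_iff two_ne_zero |>.mp hzero)

end IsQuadraticDNumber

theorem stmt11_general {R : Type*} [CommRing R] [LinearOrder R] [IsStrictOrderedRing R]
    {β β' : R} (hβ : IsQuadraticDNumber β β') (hne : |β| ≠ |β'|) (x : ℤ) (b : ℕ)
    (h1 : 2 ≤ x * β ^ b) (h2 : 2 ≤ x * β' ^ b)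
    (hd : IsQuadraticDNumber (x * β ^ b - 1) (x * β' ^ b - 1)) :
    b = 0 := by
  have hconj : x * β ^ b = x * β' ^ b :=
    ((hβ.pow b).intCast_mul x).eq_of_two_le_of_sub_one hd h1 h2
  have hx : (x : R) ≠ 0 := left_ne_zero_of_mul (two_pos.trans_le h1).ne'
  have habs : |β| ^ b = |β'| ^ b := by
    rw [← abs_pow, ← abs_pow, mul_left_cancel₀ hx hconj]
  by_contra hb
  exact hne ((pow_left_inj₀ (abs_nonneg β) (abs_nonneg β') hb).mp habs)

theorem isQuadraticDNumber_one_add_sqrt_two :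
    IsQuadraticDNumber (1 + Real.sqrt 2) (1 - Real.sqrt 2) := by
  refine ⟨-1, 2, ?_, ?_, by norm_num⟩
  · push_cast
    linear_combination Real.sq_sqrt (zero_le_two (α := ℝ))
  · push_cast
    ring

theorem abs_one_add_sqrt_two_ne : |1 + Real.sqrt 2| ≠ |1 - Real.sqrt 2| := by
  have hpos : 0 < Real.sqrt 2 := Real.sqrt_pos.mpr two_pos
  rw [Ne, abs_eq_abs]
  rintro (h | h) <;> linarith

/-- Let `α = 2^a·(1+√2)^b` with Galois conjugate `σ(α) = 2^a·(1−√2)^b`.  If `α` and `σ(α)`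
are both at least `2`, and the norm `N(α−1)` divides the square of the trace `T(α−1)` in
`ℤ` (i.e. `α − 1` is an algebraic d-number), then `b = 0`, i.e. `α ∈ ℤ`. -/
theorem stmt11 (a b : ℕ)
    (h1 : (2 : ℝ) ≤ 2 ^ a * (1 + Real.sqrt 2) ^ b)
    (h2 : (2 : ℝ) ≤ 2 ^ a * (1 - Real.sqrt 2) ^ b)
    (hd : ∃ N T : ℤ,
      (N : ℝ) = (2 ^ a * (1 + Real.sqrt 2) ^ b - 1) * (2 ^ a * (1 - Real.sqrt 2) ^ b - 1) ∧
      (T : ℝ) = (2 ^ a * (1 + Real.sqrt 2) ^ b - 1) + (2 ^ a * (1 - Real.sqrt 2) ^ b - 1) ∧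
      N ∣ T ^ 2) :
    b = 0 := by
  exact stmt11_general isQuadraticDNumber_one_add_sqrt_two abs_one_add_sqrt_two_ne (2 ^ a) b
    (mod_cast h1) (mod_cast h2) (mod_cast hd)
end

section
/- If x and y are positive real numbers satisfying x + y = x² + y² + ((√5−1)/2)·x·y, then x + y < 2. -/
/-! The quadratic form `x² + y² + c x y` is diagonal in the coordinates `x + y` and `x - y`. For
`c ≤ 2` the `(x - y)²` term can be discarded, which leaves a quadratic inequality in `x + y`. -/

theorem two_add_mul_add_sq_add_two_sub_mul_sub_sq {R : Type*} [CommRing R] (c x y : R) :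
    (2 + c) * (x + y) ^ 2 + (2 - c) * (x - y) ^ 2 = 4 * (x ^ 2 + y ^ 2 + c * x * y) := by
  ring

section LinearOrderedRing

variable {R : Type*} [CommRing R] [LinearOrder R] [IsStrictOrderedRing R] {c : R}

theorem two_add_mul_add_sq_le (hc : c ≤ 2) (x y : R) :
    (2 + c) * (x + y) ^ 2 ≤ 4 * (x ^ 2 + y ^ 2 + c * x * y) := by
  rw [← two_add_mul_add_sq_add_two_sub_mul_sub_sq]
  exact le_add_of_nonneg_right (mul_nonneg (sub_nonneg.2 hc) (sq_nonneg _))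

theorem mul_le_of_mul_sq_le_mul {a b s : R} (ha : 0 ≤ a) (hb : 0 ≤ b)
    (h : a * s ^ 2 ≤ b * s) : a * s ≤ b := by
  rcases le_or_gt s 0 with hs | hs
  · exact (mul_nonpos_of_nonneg_of_nonpos ha hs).trans hb
  · refine le_of_mul_le_mul_right ?_ hs
    rwa [mul_assoc, ← sq]

-- The bound is sharp: equality holds when `x = y` and `(2 + c) * x = 2`.
theorem stmt17_general (hc : -2 ≤ c) (hc' : c ≤ 2) {x y : R}
    (h : x + y = x ^ 2 + y ^ 2 + c * x * y) : (2 + c) * (x + y) ≤ 4 := by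
  have hsq : (2 + c) * (x + y) ^ 2 ≤ 4 * (x + y) :=
    (two_add_mul_add_sq_le hc' x y).trans_eq (congrArg (4 * ·) h.symm)
  exact mul_le_of_mul_sq_le_mul (neg_le_iff_add_nonneg'.1 hc) zero_le_four hsq

theorem lt_two_of_two_add_mul_le_four {s : R} (hc : 0 < c) (h : (2 + c) * s ≤ 4) : s < 2 := by
  have hlt : (2 + c) * s < (2 + c) * 2 := by linarith
  exact lt_of_mul_lt_mul_left hlt (by positivity)

end LinearOrderedRing

theorem sqrt_five_sub_one_div_two_eq_inv_goldenRatio :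
    (Real.sqrt 5 - 1) / 2 = Real.goldenRatio⁻¹ := by
  rw [Real.inv_goldenRatio, Real.goldenConj]
  ring

theorem sqrt_five_sub_one_div_two_mem_Ioo : (Real.sqrt 5 - 1) / 2 ∈ Set.Ioo (0 : ℝ) 1 := by
  rw [sqrt_five_sub_one_div_two_eq_inv_goldenRatio]
  exact ⟨inv_pos.2 Real.goldenRatio_pos, inv_lt_one_of_one_lt₀ Real.one_lt_goldenRatio⟩

/-- If `x` and `y` are positive reals with `x + y = x² + y² + ((√5−1)/2)·x·y`,
then `x + y < 2`. -/
theorem stmt17 (x y : ℝ) (hx : 0 < x) (hy : 0 < y)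
    (h : x + y = x ^ 2 + y ^ 2 + (Real.sqrt 5 - 1) / 2 * x * y) :
    x + y < 2 := by
  obtain ⟨hpos, hlt⟩ := sqrt_five_sub_one_div_two_mem_Ioo
  exact lt_two_of_two_add_mul_le_four hpos (stmt17_general (by linarith) (by linarith) h)
end
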